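/- Suppose the standing assumptions on f, g, h, Ω, F hold and let (x^k), (y^k), (c_k), (α_k) be generated by PGSA. Then x^k ∈ dom(F) for every k ∈ ℕ, and for every k ∈ ℕ: f(x^{k+1}) + h(x^{k+1}) + ((1/α_k − L)/2)·‖x^{k+1} − x^k‖₂² ≤ c_k·g(x^{k+1}). -/

import Mathlib

open Filter Topology
open scoped RealInnerProductSpace

noncomputable section

/-- The Fréchet subdifferential of an extended-real-valued function `φ` at `x`:
the set of `y` with `liminf_{z→x, z≠x} (φ z − φ x − ⟨y, z−x⟩)/‖z−x‖ ≥ 0`,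
empty when `φ x = +∞`. -/
def fsub {n : ℕ} (φ : EuclideanSpace ℝ (Fin n) → EReal) (x : EuclideanSpace ℝ (Fin n)) :
    Set (EuclideanSpace ℝ (Fin n)) :=
  {y | φ x ≠ ⊤ ∧
    0 ≤ liminf (fun z => (φ z - φ x - ((⟪y, z - x⟫ : ℝ) : EReal)) / ((‖z - x‖ : ℝ) : EReal))
      (𝓝[≠] x)}

/-- The limiting (Mordukhovich) subdifferential. -/
def lsub {n : ℕ} (φ : EuclideanSpace ℝ (Fin n) → EReal) (x : EuclideanSpace ℝ (Fin n)) :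
    Set (EuclideanSpace ℝ (Fin n)) :=
  {y | ∃ u : ℕ → EuclideanSpace ℝ (Fin n), ∃ v : ℕ → EuclideanSpace ℝ (Fin n),
      Tendsto u atTop (𝓝 x) ∧ Tendsto (fun k => φ (u k)) atTop (𝓝 (φ x)) ∧
      (∀ k, v k ∈ fsub φ (u k)) ∧ Tendsto v atTop (𝓝 y)}

/-- The subdifferential of a convex real-valued function. -/
def csub {n : ℕ} (g : EuclideanSpace ℝ (Fin n) → ℝ) (x : EuclideanSpace ℝ (Fin n)) :
    Set (EuclideanSpace ℝ (Fin n)) :=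
  {y | ∀ z, g x + ⟪y, z - x⟫ ≤ g z}

/-- The (possibly set-valued) proximity operator of a proper lsc extended-real-valued
function `ψ` at `u`. -/
def proxSet {n : ℕ} (ψ : EuclideanSpace ℝ (Fin n) → EReal) (u : EuclideanSpace ℝ (Fin n)) :
    Set (EuclideanSpace ℝ (Fin n)) :=
  {y | ∀ z, ψ y + ((‖y - u‖ ^ 2 / 2 : ℝ) : EReal) ≤ ψ z + ((‖z - u‖ ^ 2 / 2 : ℝ) : EReal)}

/-- The fractional objective `F = (f+h)/g` on `Ω ∩ dom f`, `+∞` elsewhere. -/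
def Ffrac {n : ℕ} (f : EuclideanSpace ℝ (Fin n) → EReal) (g h : EuclideanSpace ℝ (Fin n) → ℝ) :
    EuclideanSpace ℝ (Fin n) → EReal :=
  fun x => if g x ≠ 0 ∧ f x ≠ ⊤ then ((((f x).toReal + h x) / g x : ℝ) : EReal) else ⊤

/-- The descent lemma for functions with Lipschitz gradient. -/
lemma descent_aux {n : ℕ} (h : EuclideanSpace ℝ (Fin n) → ℝ)
    (h' : EuclideanSpace ℝ (Fin n) → EuclideanSpace ℝ (Fin n)) (L : ℝ) (hL : 0 < L)
    (hh_grad : ∀ z, HasGradientAt h (h' z) z)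
    (hh_lip : LipschitzWith (Real.toNNReal L) h') (x d : EuclideanSpace ℝ (Fin n)) :
    h (x + d) ≤ h x + ⟪h' x, d⟫ + L / 2 * ‖d‖ ^ 2 := by
  have hder : ∀ t : ℝ, HasDerivAt
      (fun t : ℝ => h (x + t • d) - t * ⟪h' x, d⟫ - t ^ 2 * (L / 2 * ‖d‖ ^ 2))
      (⟪h' (x + t • d), d⟫ - 1 * ⟪h' x, d⟫ - (2 * t) * (L / 2 * ‖d‖ ^ 2)) t := by
    intro t
    have h1 : HasDerivAt (fun t : ℝ => x + t • d) d t := by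
      simpa using ((hasDerivAt_id t).smul_const d).const_add x
    have h2 := (hh_grad (x + t • d)).hasFDerivAt.comp_hasDerivAt t h1
    have h3 : HasDerivAt (fun t : ℝ => t ^ 2) (2 * t) t := by
      simpa using hasDerivAt_pow 2 t
    have h4 : HasDerivAt (fun t : ℝ => h (x + t • d)) ⟪h' (x + t • d), d⟫ t := by
      simpa [Function.comp_def] using h2
    exact (h4.sub ((hasDerivAt_id t).mul_const _)).sub (h3.mul_const _)
  have hanti : AntitoneOn
      (fun t : ℝ => h (x + t • d) - t * ⟪h' x, d⟫ - t ^ 2 * (L / 2 * ‖d‖ ^ 2))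
      (Set.Icc 0 1) := by
    apply antitoneOn_of_deriv_nonpos (convex_Icc 0 1)
    · exact fun t _ => (hder t).continuousAt.continuousWithinAt
    · exact fun t _ => (hder t).differentiableAt.differentiableWithinAt
    · intro t ht
      rw [interior_Icc] at ht
      rw [(hder t).deriv]
      have h1 := real_inner_le_norm (h' (x + t • d) - h' x) d
      have h2 := hh_lip.dist_le_mul (x + t • d) x
      rw [dist_eq_norm, dist_eq_norm, Real.coe_toNNReal L hL.le, add_sub_cancel_left, norm_smul,
        Real.norm_of_nonneg ht.1.le] at h2
      have h3 := mul_le_mul_of_nonneg_right h2 (norm_nonneg d)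
      rw [inner_sub_left] at h1
      nlinarith
  have := hanti (Set.left_mem_Icc.2 zero_le_one) (Set.right_mem_Icc.2 zero_le_one) zero_le_one
  simp at this
  linarith

/-- Lemma 4.2: the PGSA iterates stay in dom F and satisfy the basic descent inequality. -/
theorem pgsa_iterates_in_domain_and_descent
    {n : ℕ} (hn : 1 ≤ n)
    (f : EuclideanSpace ℝ (Fin n) → EReal) (g h : EuclideanSpace ℝ (Fin n) → ℝ)
    (h' : EuclideanSpace ℝ (Fin n) → EuclideanSpace ℝ (Fin n)) (L : ℝ)
    (hf_ne_bot : ∀ z, f z ≠ ⊥) (hf_proper : ∃ z, f z ≠ ⊤)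
    (hf_lsc : LowerSemicontinuous f)
    (hf_bdd : ∃ m : ℝ, ∀ z, (m : EReal) ≤ f z)
    (hf_cont : ContinuousOn f {z | f z ≠ ⊤})
    (hg_cvx : ConvexOn ℝ Set.univ g)
    (hL : 0 < L)
    (hh_grad : ∀ z, HasGradientAt h (h' z) z)
    (hh_lip : LipschitzWith (Real.toNNReal L) h')
    (hΩ : ∃ z, g z ≠ 0)
    (hfh : ∀ z, 0 ≤ f z + ((h z : ℝ) : EReal))
    (hg_pos : ∀ z, f z ≠ ⊤ → g z ≠ 0 → 0 < g z)
    (x y : ℕ → EuclideanSpace ℝ (Fin n)) (c α : ℕ → ℝ) (αlo αhi : ℝ)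
    (hx0 : g (x 0) ≠ 0 ∧ f (x 0) ≠ ⊤)
    (hαlo : 0 < αlo) (hαhi : αhi < 1 / L) (hα : ∀ k, αlo ≤ α k ∧ α k ≤ αhi)
    (hy : ∀ k, y (k + 1) ∈ csub g (x k))
    (hc : ∀ k, c k = ((f (x k)).toReal + h (x k)) / g (x k))
    (hiter : ∀ k, x (k + 1) ∈ proxSet (fun z => ((α k : ℝ) : EReal) * f z)
      (x k - α k • h' (x k) + (α k * c k) • y (k + 1)))
    : (∀ k, g (x k) ≠ 0 ∧ f (x k) ≠ ⊤) ∧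
      ∀ k, f (x (k + 1)) +
          ((h (x (k + 1)) + (1 / α k - L) / 2 * ‖x (k + 1) - x k‖ ^ 2 : ℝ) : EReal) ≤
        ((c k * g (x (k + 1)) : ℝ) : EReal) := by
  have hstep : ∀ k, (g (x k) ≠ 0 ∧ f (x k) ≠ ⊤) → f (x (k + 1)) ≠ ⊤ ∧
      (f (x (k + 1))).toReal +
          (h (x (k + 1)) + (1 / α k - L) / 2 * ‖x (k + 1) - x k‖ ^ 2) ≤ c k * g (x (k + 1)) := by
    rintro k ⟨hgk, hfk⟩
    have hαk : 0 < α k := lt_of_lt_of_le hαlo (hα k).1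
    have hg := hg_pos _ hfk hgk
    have hp := hiter k (x k)
    have hcast : f (x k) = ((f (x k)).toReal : EReal) := (EReal.coe_toReal hfk (hf_ne_bot _)).symm
    have hc0 : 0 ≤ c k := by
      have := hfh (x k)
      rw [hcast, ← EReal.coe_add, ← EReal.coe_zero, EReal.coe_le_coe_iff] at this
      rw [hc k]
      exact div_nonneg this hg.le
    have hfin : f (x (k + 1)) ≠ ⊤ := by
      intro htop
      simp only [] at hp
      rw [htop, hcast, EReal.coe_mul_top_of_pos hαk, EReal.top_add_coe, ← EReal.coe_mul,
        ← EReal.coe_add, top_le_iff] at hp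
      exact EReal.coe_ne_top _ hp
    refine ⟨hfin, ?_⟩
    have hcast' : f (x (k + 1)) = ((f (x (k + 1))).toReal : EReal) :=
      (EReal.coe_toReal hfin (hf_ne_bot _)).symm
    simp only [] at hp
    rw [hcast, hcast', ← EReal.coe_mul, ← EReal.coe_mul, ← EReal.coe_add, ← EReal.coe_add,
      EReal.coe_le_coe_iff] at hp
    have hd := descent_aux h h' L hL hh_grad hh_lip (x k) (x (k + 1) - x k)
    rw [add_sub_cancel] at hd
    have hs := mul_le_mul_of_nonneg_left (hy k (x (k + 1))) hc0
    have hcg : c k * g (x k) = (f (x k)).toReal + h (x k) := by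
      rw [hc k]; field_simp
    generalize (f (x (k + 1))).toReal = a at *
    generalize (f (x k)).toReal = b at *
    have e1 : x (k + 1) - (x k - α k • h' (x k) + (α k * c k) • y (k + 1)) =
        (x (k + 1) - x k) + α k • (h' (x k) - c k • y (k + 1)) := by
      module
    have e2 : x k - (x k - α k • h' (x k) + (α k * c k) • y (k + 1)) =
        α k • (h' (x k) - c k • y (k + 1)) := by
      module
    rw [e1, e2, norm_add_sq_real, inner_smul_right, inner_sub_right, inner_smul_right,
      real_inner_comm, real_inner_comm (y (k + 1))] at hp
    have hp2 : α k * (a + 1 / α k / 2 * ‖x (k + 1) - x k‖ ^ 2 + ⟪h' (x k), x (k + 1) - x k⟫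
        - c k * ⟪y (k + 1), x (k + 1) - x k⟫) ≤ α k * b := by
      have e3 : α k * (1 / α k / 2 * ‖x (k + 1) - x k‖ ^ 2) = ‖x (k + 1) - x k‖ ^ 2 / 2 := by
        field_simp
      linarith
    have hp3 := le_of_mul_le_mul_left hp2 hαk
    linarith
  have hdom : ∀ k, g (x k) ≠ 0 ∧ f (x k) ≠ ⊤ := by
    intro k
    induction k with
    | zero => exact hx0
    | succ k ih =>
      obtain ⟨hfin, hle⟩ := hstep k ih
      refine ⟨fun h0 => ?_, hfin⟩
      have hαk : 0 < α k := lt_of_lt_of_le hαlo (hα k).1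
      have hfh' := hfh (x (k + 1))
      rw [← EReal.coe_toReal hfin (hf_ne_bot _), ← EReal.coe_add, ← EReal.coe_zero,
        EReal.coe_le_coe_iff] at hfh'
      have hpos : 0 < 1 / α k - L := by
        have h1 : α k < 1 / L := lt_of_le_of_lt (hα k).2 hαhi
        have h2 := (lt_one_div hαk hL).1 h1
        linarith
      rw [h0, mul_zero] at hle
      by_cases hx : x (k + 1) - x k = 0
      · rw [sub_eq_zero] at hx
        exact ih.1 (hx ▸ h0)
      · have := norm_pos_iff.2 hx
        have : 0 < (1 / α k - L) / 2 * ‖x (k + 1) - x k‖ ^ 2 := by positivity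
        linarith
  refine ⟨hdom, fun k => ?_⟩
  obtain ⟨hfin, hle⟩ := hstep k (hdom k)
  rw [← EReal.coe_toReal hfin (hf_ne_bot _), ← EReal.coe_add, EReal.coe_le_coe_iff]
  exact hle
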